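/- A smooth plane curve C : f = 0 of degree d ≥ 3 over ℂ has at most 3d total inflection points. -/

import Mathlib

/-!
The proof intersects the curve `C : f = 0` with its Hessian curve, of degree `3 (d - 2)`, and shows
that each total inflection point counts at least `d - 2` times. Bezout's bound
`n (d - 2) ≤ d · 3 (d - 2)` then gives `n ≤ 3 d`.

Let `p` be a total inflection point with tangent `l = 0`, and `m = 0` another line through `p`. Then
`f = c m ^ d + l G` with `c ≠ 0` (`normal_form`), and differentiating gives
`hess f ≡ m ^ (d - 2) B` modulo `l`, where `B` is a constant times `det (m, l, ∇G) ^ 2`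
(`hess_normal`). Smoothness at `p` forces `G(p) ≠ 0`, and with Euler's identity `B(p) ≠ 0`
(`values_at`).

The intersection is measured by the resultant `R ∈ ℂ[X]` of `f` and `hess f`, in an affine chart
whose vertical direction is generic.
* `R` has degree at most `d · 3 (d - 2)` (`natDegree_resultant_le`).
* `R` lies in the ideal of the two curves, so `(X - x₀) ^ (d - 2)` divides it for each total
  inflection point `(x₀, y₀)` (`pow_dvd_of_mem`).
* `R ≠ 0` (`resultant_ne_zero_of_flex`): the curves have no common component. The irreducibility of
  `C` is not needed for this. At a single total inflection point the multiplicities `d` and `d - 2`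
  with which the two curves meet the tangent already exclude a common factor.

In a generic chart the total inflection points have distinct abscissas (`card_le_of_chart`,
`card_le_of_family`), so the corresponding powers of linear factors multiply up.
-/

open MvPolynomial

/-- The tangent plane `T_x = {v ∈ ℂ³ : ∇f(x)·v = 0}` of the curve `f = 0` at `x`. -/
def tangentSet (f : MvPolynomial (Fin 3) ℂ) (x : Fin 3 → ℂ) : Set (Fin 3 → ℂ) :=
  {v | ∑ i : Fin 3, eval x (pderiv i f) * v i = 0}

/-- `x` is a total inflection point of the plane curve `f = 0` of degree `d`:
`x` is a nonzero point of the curve and the restriction of `f` to the tangent line at `x`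
equals, up to a nonzero scalar, the `d`-th power of a linear form. -/
def IsTotalInflection (d : ℕ) (f : MvPolynomial (Fin 3) ℂ) (x : Fin 3 → ℂ) : Prop :=
  x ≠ 0 ∧ eval x f = 0 ∧ ∃ c : ℂ, c ≠ 0 ∧ ∃ γ : (Fin 3 → ℂ) →ₗ[ℂ] ℂ,
    ∀ v ∈ tangentSet f x, eval v f = c * (γ v) ^ d

/-! ### Linear forms, the Hessian and lines in the plane -/

/-- The linear form `v ↦ a ⬝ᵥ v` as a polynomial. -/
noncomputable def lin (a : Fin 3 → ℂ) : MvPolynomial (Fin 3) ℂ := ∑ i, C (a i) * X i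

/-- The Hessian determinant of `f`. -/
noncomputable def hess (f : MvPolynomial (Fin 3) ℂ) : MvPolynomial (Fin 3) ℂ :=
  Matrix.det (Matrix.of fun i j : Fin 3 => pderiv i (pderiv j f))

/-- The determinant with rows `a`, `b` and `∇G`. -/
noncomputable def jac (a b : Fin 3 → ℂ) (G : MvPolynomial (Fin 3) ℂ) : MvPolynomial (Fin 3) ℂ :=
  Matrix.det !![C (a 0), C (a 1), C (a 2); C (b 0), C (b 1), C (b 2);
    pderiv 0 G, pderiv 1 G, pderiv 2 G]

open Matrix in
lemma eval_lin (a v : Fin 3 → ℂ) : eval v (lin a) = a ⬝ᵥ v := by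
  simp [lin, dotProduct]

lemma lin_homog (a : Fin 3 → ℂ) : (lin a).IsHomogeneous 1 :=
  IsHomogeneous.sum _ _ _ fun _ _ => isHomogeneous_C_mul_X _ _

lemma pderiv_lin (a : Fin 3 → ℂ) (i : Fin 3) : pderiv i (lin a) = C (a i) := by
  fin_cases i <;> simp [lin, Fin.sum_univ_three, pderiv_X]

lemma lin_ne_zero {a : Fin 3 → ℂ} (ha : a ≠ 0) : lin a ≠ 0 := by
  obtain ⟨i, hi⟩ := Function.ne_iff.mp ha
  intro h
  have := pderiv_lin a i
  rw [h] at this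
  simp only [map_zero] at this
  exact hi (by simpa using this.symm)

lemma algHom_aeval {A : Type*} [CommRing A] [Algebra ℂ A] (φ : A →ₐ[ℂ] ℂ) (s : Fin 3 → A)
    (F : MvPolynomial (Fin 3) ℂ) : φ (aeval s F) = eval (fun i => φ (s i)) F := by
  rw [comp_aeval_apply, aeval_eq_eval]

open Matrix in
/-- A polynomial vanishing on the plane `l = 0` is a multiple of `l`. -/
lemma lin_dvd {l : Fin 3 → ℂ} (hl : l ≠ 0) {F : MvPolynomial (Fin 3) ℂ}
    (hF : ∀ v, l ⬝ᵥ v = 0 → eval v F = 0) : lin l ∣ F := by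
  obtain ⟨j, hj⟩ := Function.ne_iff.mp hl
  simp only [Pi.zero_apply] at hj
  -- substitute the projection of the space onto the plane along the `j`-th axis
  let s : Fin 3 → MvPolynomial (Fin 3) ℂ := fun i => X i - C ((Pi.single j (l j)⁻¹ : Fin 3 → ℂ) i) * lin l
  have h0 : aeval s F = 0 := by
    apply MvPolynomial.funext
    intro v
    have : eval v (aeval s F) = eval (fun i => eval v (s i)) F := by
      have := algHom_aeval (MvPolynomial.aeval v) s F
      simpa [aeval_eq_eval] using this
    rw [this, hF, map_zero]
    have : (fun i => eval v (s i)) = v - (l ⬝ᵥ v) • (Pi.single j (l j)⁻¹ : Fin 3 → ℂ) := by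
      ext i; simp [s, eval_lin, mul_comm]
    rw [this, dotProduct_sub, dotProduct_smul, dotProduct_single]
    field_simp
    simp
  rw [← Ideal.mem_span_singleton, ← Ideal.Quotient.eq_zero_iff_mem]
  have hc : (Ideal.Quotient.mkₐ ℂ (Ideal.span {lin l})).comp (aeval s)
      = Ideal.Quotient.mkₐ ℂ (Ideal.span {lin l}) := by
    apply MvPolynomial.algHom_ext
    intro i
    have : Ideal.Quotient.mk (Ideal.span {lin l}) (lin l) = 0 :=
      Ideal.Quotient.eq_zero_iff_mem.mpr (Ideal.mem_span_singleton_self _)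
    simp [s, this]
  have := congrArg (fun φ => φ F) hc
  simp only [AlgHom.comp_apply, h0, map_zero] at this
  exact this.symm

open Matrix in
lemma lin_dvd_homog {l : Fin 3 → ℂ} (hl : l ≠ 0) {F : MvPolynomial (Fin 3) ℂ} {d : ℕ}
    (hh : F.IsHomogeneous (1 + d))
    (hF : ∀ v, l ⬝ᵥ v = 0 → eval v F = 0) : ∃ G, G.IsHomogeneous d ∧ F = lin l * G := by
  obtain ⟨G, hG⟩ := lin_dvd hl hF
  refine ⟨homogeneousComponent d G, homogeneousComponent_isHomogeneous _ _, ?_⟩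
  let _ := gradedAlgebra (σ := Fin 3) (R := ℂ)
  have h1 := DirectSum.coe_decompose_mul_add_of_left_mem (homogeneousSubmodule (Fin 3) ℂ)
    (i := 1) (j := d) (b := G) ((mem_homogeneousSubmodule _ _).mpr (lin_homog l))
  have h2 : ∀ n φ, ((DirectSum.decompose (homogeneousSubmodule (Fin 3) ℂ) φ n : _) :
      MvPolynomial (Fin 3) ℂ) = homogeneousComponent n φ :=
    fun n φ => decomposition.decompose'_apply φ n
  rw [h2, h2, ← hG, homogeneousComponent_eq_self hh] at h1
  exact h1

open Polynomial in
/-- Restricting a form of degree `n` to the pencil `a + T b` gives a polynomial in `T` of degree at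
most `n`, with top coefficient the value of the form at `b`. -/
lemma pencil {R : Type*} [CommRing R] [Algebra ℂ R] {F : MvPolynomial (Fin 3) ℂ} {n : ℕ}
    (hF : F.IsHomogeneous n) (a b : Fin 3 → R) :
    (aeval (fun i => Polynomial.C (a i) + Polynomial.X * Polynomial.C (b i)) F).natDegree ≤ n ∧
    (aeval (fun i => Polynomial.C (a i) + Polynomial.X * Polynomial.C (b i)) F).coeff n
      = aeval b F := by
  have hlin : ∀ i, (Polynomial.C (a i) + Polynomial.X * Polynomial.C (b i)).natDegree ≤ 1 := by
    intro i; compute_degree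
  rw [F.as_sum]
  simp only [map_sum, finsetSum_coeff]
  suffices h : ∀ e ∈ F.support,
      (aeval (fun i => Polynomial.C (a i) + Polynomial.X * Polynomial.C (b i))
        (monomial e (coeff e F))).natDegree ≤ n ∧
      (aeval (fun i => Polynomial.C (a i) + Polynomial.X * Polynomial.C (b i))
        (monomial e (coeff e F))).coeff n = aeval b (monomial e (coeff e F)) from
    ⟨natDegree_sum_le_of_forall_le _ _ fun e he => (h e he).1,
      Finset.sum_congr rfl fun e he => (h e he).2⟩
  intro e he
  have hdeg : e 0 + e 1 + e 2 = n := by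
    have := hF (mem_support_iff.mp he)
    rw [Finsupp.weight_apply, Finsupp.sum_fintype _ _ (by simp)] at this
    simpa [Fin.sum_univ_three] using this
  have hp : ∀ i k, ((Polynomial.C (a i) + Polynomial.X * Polynomial.C (b i)) ^ k).natDegree ≤ k :=
    fun i k => (natDegree_pow_le_of_le k (hlin i)).trans (by simp)
  have hpc : ∀ i k, ((Polynomial.C (a i) + Polynomial.X * Polynomial.C (b i)) ^ k).coeff k
      = b i ^ k := by
    intro i k
    have := coeff_pow_of_natDegree_le (m := k) (hlin i)
    simpa [Polynomial.coeff_C] using this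
  have h01 := natDegree_mul_le_of_le (hp 0 (e 0)) (hp 1 (e 1))
  simp only [MvPolynomial.aeval_monomial, Finsupp.prod_pow, Fin.prod_univ_three]
  rw [IsScalarTower.algebraMap_apply ℂ R R[X], Polynomial.algebraMap_eq]
  constructor
  · refine (natDegree_C_mul_le _ _).trans ?_
    rw [← hdeg]
    exact natDegree_mul_le_of_le h01 (hp 2 (e 2))
  · rw [Polynomial.coeff_C_mul, ← hdeg, coeff_mul_add_eq_of_natDegree_le h01 (hp 2 (e 2)),
      coeff_mul_add_eq_of_natDegree_le (hp 0 (e 0)) (hp 1 (e 1)), hpc, hpc, hpc]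

open Matrix in
/-- Cramer's rule in a basis of `ℂ³`. -/
lemma exists_combination {p q w : Fin 3 → ℂ} (h : (p ⨯₃ q) ⬝ᵥ w ≠ 0) (v : Fin 3 → ℂ) :
    ∃ a b c : ℂ, v = a • p + b • q + c • w := by
  refine ⟨((q ⨯₃ w) ⬝ᵥ v) / ((p ⨯₃ q) ⬝ᵥ w), ((w ⨯₃ p) ⬝ᵥ v) / ((p ⨯₃ q) ⬝ᵥ w),
    ((p ⨯₃ q) ⬝ᵥ v) / ((p ⨯₃ q) ⬝ᵥ w), ?_⟩
  ext i
  simp only [Pi.add_apply, Pi.smul_apply, smul_eq_mul]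
  field_simp
  fin_cases i <;> simp [cross_apply, dotProduct, Fin.sum_univ_three] <;> ring

open Matrix in
/-- A curve containing a line is singular. -/
lemma not_line {f : MvPolynomial (Fin 3) ℂ} {d : ℕ} (hd : 1 ≤ d)
    (hsm : ∀ x : Fin 3 → ℂ, x ≠ 0 → ∃ i : Fin 3, eval x (pderiv i f) ≠ 0)
    {p q w l : Fin 3 → ℂ} (hp : l ⬝ᵥ p = 0) (hq : l ⬝ᵥ q ≠ 0) (hw : (p ⨯₃ q) ⬝ᵥ w ≠ 0)
    {G : MvPolynomial (Fin 3) ℂ} (hG : G.IsHomogeneous d) (hf : f = lin l * G) : False := by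
  have key : ∀ v, v ≠ 0 → l ⬝ᵥ v = 0 → eval v G ≠ 0 := by
    intro v hv hlv hGv
    obtain ⟨i, hi⟩ := hsm v hv
    apply hi
    rw [hf, (pderiv i).leibniz]
    simp [eval_lin, hlv, hGv]
  have hp0 : p ≠ 0 := by rintro rfl; simp at hw
  set u : Fin 3 → ℂ := w - ((l ⬝ᵥ w) / (l ⬝ᵥ q)) • q with hu
  have hlu : l ⬝ᵥ u = 0 := by
    rw [hu, dotProduct_sub, dotProduct_smul, smul_eq_mul]; field_simp; ring
  have hmu : (p ⨯₃ q) ⬝ᵥ u ≠ 0 := by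
    have : (p ⨯₃ q) ⬝ᵥ q = 0 := by rw [dotProduct_comm]; exact dot_cross_self _ _
    rw [hu, dotProduct_sub, dotProduct_smul, this]; simpa using hw
  obtain ⟨h1, h2⟩ := pencil hG u p
  set P := aeval (fun i => Polynomial.C (u i) + Polynomial.X * Polynomial.C (p i)) G with hP
  have hc : P.coeff d ≠ 0 := by
    rw [h2]
    have := key p hp0 hp
    simpa [aeval_eq_eval] using this
  obtain ⟨t, ht⟩ := IsAlgClosed.exists_root P (by
    intro h
    have := Polynomial.le_degree_of_ne_zero hc
    rw [h] at this
    have : d ≤ 0 := by exact_mod_cast this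
    omega)
  refine key (u + t • p) ?_ ?_ ?_
  · intro h
    apply hmu
    have h3 : (p ⨯₃ q) ⬝ᵥ (u + t • p) = 0 := by rw [h]; simp
    have h4 : (p ⨯₃ q) ⬝ᵥ p = 0 := by rw [dotProduct_comm]; exact dot_self_cross _ _
    rw [dotProduct_add, dotProduct_smul, h4] at h3
    simpa using h3
  · rw [dotProduct_add, dotProduct_smul, hlu, hp]; simp
  · have h3 : P.eval t = eval (u + t • p) G := by
      have h4 := algHom_aeval (Polynomial.aeval t)
        (fun i => Polynomial.C (u i) + Polynomial.X * Polynomial.C (p i)) G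
      rw [← hP, Polynomial.coe_aeval_eq_eval] at h4
      rw [h4]
      congr 2
      ext i
      simp only [Polynomial.eval_add, Polynomial.eval_mul, Polynomial.eval_C, Polynomial.eval_X,
        Pi.add_apply, Pi.smul_apply, smul_eq_mul]
    rw [← h3]; exact ht

/-! ### The curve and its Hessian at a total inflection point -/

open Matrix in
/-- At a total inflection point `p` with tangent line `l = 0`, and for `m = 0` the line
joining `p` to a point `q` off that tangent, the equation of the curve is `c m ^ d + l G`. -/
lemma normal_form {f : MvPolynomial (Fin 3) ℂ} {d : ℕ} (hd : 3 ≤ d) (hf : f.IsHomogeneous d)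
    (hsm : ∀ x : Fin 3 → ℂ, x ≠ 0 → ∃ i : Fin 3, eval x (pderiv i f) ≠ 0)
    {p q w l : Fin 3 → ℂ} (hp : IsTotalInflection d f p) (hl : l = fun i => eval p (pderiv i f))
    (hlp : l ⬝ᵥ p = 0)
    (hq : l ⬝ᵥ q ≠ 0) (hw : (p ⨯₃ q) ⬝ᵥ w ≠ 0) :
    ∃ c : ℂ, c ≠ 0 ∧ ∃ G, G.IsHomogeneous (d - 1) ∧
      f = C c * lin (p ⨯₃ q) ^ d + lin l * G := by
  obtain ⟨hp0, hfp, c, hc, γ, hγ⟩ := hp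
  have hT : ∀ v, v ∈ tangentSet f p ↔ l ⬝ᵥ v = 0 := by
    intro v; rw [hl]; rfl
  have hl0 : l ≠ 0 := by rintro rfl; simp at hq
  have hγp : γ p = 0 := by
    have := hγ p ((hT p).2 hlp)
    rw [hfp] at this
    have := (mul_eq_zero.mp this.symm).resolve_left hc
    exact pow_eq_zero_iff (by omega) |>.mp this
  have hmp : (p ⨯₃ q) ⬝ᵥ p = 0 := by rw [dotProduct_comm]; exact dot_self_cross _ _
  have hmq : (p ⨯₃ q) ⬝ᵥ q = 0 := by rw [dotProduct_comm]; exact dot_cross_self _ _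
  -- on the tangent plane both `γ` and `m` vanish at `p`, so they are proportional there
  have hk : ∃ k : ℂ, ∀ v, l ⬝ᵥ v = 0 → γ v = k * ((p ⨯₃ q) ⬝ᵥ v) := by
    refine ⟨(γ w - (l ⬝ᵥ w) / (l ⬝ᵥ q) * γ q) / ((p ⨯₃ q) ⬝ᵥ w), fun v hv => ?_⟩
    obtain ⟨a, b, e, rfl⟩ := exists_combination hw v
    simp only [dotProduct_add, dotProduct_smul, hlp, smul_eq_mul, mul_zero, zero_add] at hv
    simp only [dotProduct_add, dotProduct_smul, hmp, hmq, smul_eq_mul, mul_zero, zero_add,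
      map_add, map_smul, hγp]
    have hb : b = - e * (l ⬝ᵥ w) / (l ⬝ᵥ q) := by
      field_simp; linear_combination hv
    rw [hb]
    field_simp
    ring
  obtain ⟨k, hk⟩ := hk
  have hFh : (f - C (c * k ^ d) * lin (p ⨯₃ q) ^ d).IsHomogeneous (1 + (d - 1)) := by
    have h1 : 1 + (d - 1) = d := by omega
    rw [h1]
    refine hf.sub ?_
    have := ((lin_homog (p ⨯₃ q)).pow d).C_mul (c * k ^ d)
    simpa using this
  obtain ⟨G, hG, hfG⟩ := lin_dvd_homog hl0 hFh (by
    intro v hv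
    simp only [map_sub, map_mul, map_pow, eval_C, eval_lin, hγ v ((hT v).2 hv), hk v hv]
    ring)
  refine ⟨c * k ^ d, ?_, G, hG, by rw [← hfG]; ring⟩
  intro h0
  rw [h0] at hfG
  exact not_line (by omega : 1 ≤ d - 1) hsm hlp hq hw hG (by simpa using hfG)

/-- Modulo `l`, the Hessian of `c m ^ (k + 2) + l G` is `m ^ k` times a constant times the square
of the determinant of `m`, `l`, `∇G`; `values_at` shows that the latter does not vanish at the
inflection point, so the Hessian meets the tangent there with multiplicity exactly `k`. -/
lemma hess_normal {f : MvPolynomial (Fin 3) ℂ} {k : ℕ} {c : ℂ} {m l : Fin 3 → ℂ}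
    {G : MvPolynomial (Fin 3) ℂ} (hf : f = C c * lin m ^ (k + 2) + lin l * G) :
    ∃ A, hess f = lin l * A
      + lin m ^ k * (C (-(c * (k + 2) * (k + 1))) * jac m l G ^ 2) := by
  have hE : ∀ i j, pderiv i (pderiv j f) = C (c * (k + 2) * (k + 1)) * lin m ^ k * C (m i) * C (m j)
      + lin l * pderiv i (pderiv j G) + C (l i) * pderiv j G + C (l j) * pderiv i G := by
    intro i j
    rw [hf]
    simp only [map_add, Derivation.leibniz, Derivation.leibniz_pow, pderiv_lin, pderiv_C,
      smul_eq_mul, nsmul_eq_mul, map_mul, map_natCast, Derivation.map_natCast, add_tsub_cancel_right, map_one,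
      mul_zero, add_zero, zero_add, map_ofNat,
      show k + 2 - 1 = k + 1 from rfl]
    push_cast
    ring
  let π := Ideal.Quotient.mk (Ideal.span {lin l})
  have hl0 : π (lin l) = 0 := 
    Ideal.Quotient.eq_zero_iff_mem.mpr (Ideal.mem_span_singleton_self _)
  have hdvd : lin l ∣ hess f - lin m ^ k * (C (-(c * (k + 2) * (k + 1))) * jac m l G ^ 2) := by
    rw [← Ideal.mem_span_singleton, ← Ideal.Quotient.eq_zero_iff_mem]
    change π _ = 0
    simp only [hess, jac, Matrix.det_fin_three, Matrix.of_apply, hE, map_sub, map_add, map_mul,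
      map_neg, map_pow, hl0, zero_mul, add_zero, Matrix.cons_val]
    ring
  obtain ⟨A, hA⟩ := hdvd
  exact ⟨A, by rw [← hA]; ring⟩

lemma hess_homog {f : MvPolynomial (Fin 3) ℂ} {d : ℕ} (hf : f.IsHomogeneous d) :
    (hess f).IsHomogeneous (3 * (d - 2)) := by
  have h : ∀ i j, (pderiv i (pderiv j f)).IsHomogeneous (d - 2) := fun i j => hf.pderiv.pderiv
  have h3 : 3 * (d - 2) = d - 2 + (d - 2) + (d - 2) := by ring
  rw [hess, Matrix.det_fin_three, h3]
  simp only [Matrix.of_apply]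
  exact ((((((((h _ _).mul (h _ _)).mul (h _ _)).sub (((h _ _).mul (h _ _)).mul (h _ _))).sub
    (((h _ _).mul (h _ _)).mul (h _ _))).add (((h _ _).mul (h _ _)).mul (h _ _))).add
    (((h _ _).mul (h _ _)).mul (h _ _))).sub (((h _ _).mul (h _ _)).mul (h _ _)))

open Matrix in
/-- The point `P` is where the lines `l = 0` and `m = 0` meet; smoothness of the curve there
prevents `G` from vanishing, and then Euler's identity makes `m`, `l`, `∇G` independent. -/
lemma values_at {f : MvPolynomial (Fin 3) ℂ} {d : ℕ} (hd : 3 ≤ d)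
    (hsm : ∀ x : Fin 3 → ℂ, x ≠ 0 → ∃ i : Fin 3, eval x (pderiv i f) ≠ 0)
    {P q w l m : Fin 3 → ℂ} (hP : P ≠ 0) (hlP : l ⬝ᵥ P = 0) (hmP : m ⬝ᵥ P = 0) (hmq : m ⬝ᵥ q = 0)
    (hq : l ⬝ᵥ q ≠ 0) (hw : m ⬝ᵥ w ≠ 0) {c : ℂ} {G : MvPolynomial (Fin 3) ℂ}
    (hG : G.IsHomogeneous (d - 1)) (hf : f = C c * lin m ^ d + lin l * G) :
    eval P f = 0 ∧ eval P G ≠ 0 ∧ eval P (jac m l G) ≠ 0 := by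
  have hGP : eval P G ≠ 0 := by
    intro h
    obtain ⟨i, hi⟩ := hsm P hP
    apply hi
    have : d - 1 ≠ 0 := by omega
    rw [hf]
    simp [Derivation.leibniz, Derivation.leibniz_pow, eval_lin, hlP, hmP, h, this]
  refine ⟨?_, hGP, ?_⟩
  · rw [hf]
    have : d ≠ 0 := by omega
    simp [eval_lin, hlP, hmP, this]
  · have hE := congrArg (eval P) hG.sum_X_mul_pderiv
    rw [Fin.sum_univ_three] at hE
    simp only [map_add, map_mul, eval_X, nsmul_eq_mul, map_natCast] at hE
    have hd1 : ((d - 1 : ℕ) : ℂ) ≠ 0 := by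
      have : d - 1 ≠ 0 := by omega
      exact_mod_cast this
    simp only [dotProduct, Fin.sum_univ_three] at *
    intro h
    have hjac : eval P (jac m l G) = (m 0 * l 1 * eval P (pderiv 2 G) - m 0 * l 2 * eval P (pderiv 1 G)
      - m 1 * l 0 * eval P (pderiv 2 G) + m 1 * l 2 * eval P (pderiv 0 G)
      + m 2 * l 0 * eval P (pderiv 1 G) - m 2 * l 1 * eval P (pderiv 0 G)) := by
      simp [jac, Matrix.det_fin_three]
    rw [h] at hjac
    -- the product of the matrix with rows `m`, `l`, `∇G` and the one with columns `w`, `q`, `P`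
    -- is triangular with nonzero diagonal
    have hprod : (m 0 * w 0 + m 1 * w 1 + m 2 * w 2) * (l 0 * q 0 + l 1 * q 1 + l 2 * q 2)
        * (((d - 1 : ℕ) : ℂ) * eval P G) = 0 := by
      rw [← hE]
      linear_combination (-(w 0 * (q 1 * P 2 - q 2 * P 1) - q 0 * (w 1 * P 2 - w 2 * P 1)
          + P 0 * (w 1 * q 2 - w 2 * q 1))) * hjac
        + (m 0 * w 0 + m 1 * w 1 + m 2 * w 2)
          * (eval P (pderiv 0 G) * q 0 + eval P (pderiv 1 G) * q 1 + eval P (pderiv 2 G) * q 2) * hlP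
        + ((l 0 * w 0 + l 1 * w 1 + l 2 * w 2) * (eval P (pderiv 0 G) * P 0 + eval P (pderiv 1 G) * P 1 + eval P (pderiv 2 G) * P 2)
          - (l 0 * P 0 + l 1 * P 1 + l 2 * P 2)
          * (eval P (pderiv 0 G) * w 0 + eval P (pderiv 1 G) * w 1 + eval P (pderiv 2 G) * w 2)) * hmq
        - ((l 0 * w 0 + l 1 * w 1 + l 2 * w 2) * (eval P (pderiv 0 G) * q 0 + eval P (pderiv 1 G) * q 1 + eval P (pderiv 2 G) * q 2)
          - (l 0 * q 0 + l 1 * q 1 + l 2 * q 2)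
          * (eval P (pderiv 0 G) * w 0 + eval P (pderiv 1 G) * w 1 + eval P (pderiv 2 G) * w 2)) * hmP
    exact (mul_ne_zero (mul_ne_zero hw hq) (mul_ne_zero hd1 hGP)) hprod

/-! ### Resultants: degree and local multiplicity -/

namespace Polynomial


/-- A polynomial in two variables, written in `ℂ[X][Y]`, has total degree at most `n`. -/
def TotalDegLE (n : ℕ) (P : ℂ[X][X]) : Prop :=
  ∀ i j, n < i + j → (P.coeff i).coeff j = 0

namespace TotalDegLE

lemma add {n : ℕ} {P Q : ℂ[X][X]} (hP : TotalDegLE n P) (hQ : TotalDegLE n Q) :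
    TotalDegLE n (P + Q) := by
  intro i j h
  simp [hP i j h, hQ i j h]

lemma mul {n m : ℕ} {P Q : ℂ[X][X]} (hP : TotalDegLE n P) (hQ : TotalDegLE m Q) :
    TotalDegLE (n + m) (P * Q) := by
  intro i j h
  rw [Polynomial.coeff_mul, finsetSum_coeff]
  refine Finset.sum_eq_zero fun a ha => ?_
  rw [Polynomial.coeff_mul]
  refine Finset.sum_eq_zero fun b hb => ?_
  rw [Finset.HasAntidiagonal.mem_antidiagonal] at ha hb
  by_cases h1 : n < a.1 + b.1
  · rw [hP _ _ h1, zero_mul]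
  · rw [hQ _ _ (by omega), mul_zero]

lemma const (r : ℂ) : TotalDegLE 0 (C (C r)) := by
  intro i j h
  rw [Polynomial.coeff_C]
  split_ifs with hi
  · rw [Polynomial.coeff_C, if_neg (by omega)]
  · simp

lemma mono {n m : ℕ} (h : n ≤ m) {P : ℂ[X][X]} (hP : TotalDegLE n P) : TotalDegLE m P :=
  fun i j hij => hP i j (by omega)

lemma pow {n : ℕ} {P : ℂ[X][X]} (hP : TotalDegLE n P) (k : ℕ) : TotalDegLE (k * n) (P ^ k) := by
  induction k with
  | zero => simpa using const 1
  | succ k ih => rw [pow_succ, Nat.succ_mul]; exact ih.mul hP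

lemma natDegree_le {n : ℕ} {P : ℂ[X][X]} (hP : TotalDegLE n P) : P.natDegree ≤ n := by
  rw [natDegree_le_iff_coeff_eq_zero]
  intro N hN
  ext j
  simpa using hP N j (by omega)

lemma coeff_natDegree_add {n : ℕ} {P : ℂ[X][X]} (hP : TotalDegLE n P) {i : ℕ}
    (h : P.coeff i ≠ 0) : (P.coeff i).natDegree + i ≤ n := by
  by_contra! hlt
  have := hP i (P.coeff i).natDegree (by omega)
  rw [Polynomial.coeff_natDegree, leadingCoeff_eq_zero] at this
  exact h this

end TotalDegLE

/-- Bezout's bound: the resultant of plane curves of degrees `d` and `e` has degree at most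
`d e`. In the Leibniz expansion of the Sylvester determinant each entry of row `i` has degree at
most `i` below a bound depending only on its column. -/
lemma natDegree_resultant_le {d e : ℕ} {F H : ℂ[X][X]} (hF : TotalDegLE d F)
    (hH : TotalDegLE e H) : (resultant F H d e).natDegree ≤ d * e := by
  rw [resultant, Matrix.det_apply]
  refine natDegree_sum_le_of_forall_le _ _ fun σ _ => ?_
  refine (natDegree_smul_le _ _).trans ?_
  by_cases h0 : ∏ i, sylvester F H d e (σ i) i = 0
  · rw [h0]; simp
  refine (natDegree_prod_le _ _).trans ?_
  have hne : ∀ j, sylvester F H d e (σ j) j ≠ 0 := fun j =>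
    (Finset.prod_ne_zero_iff.mp h0) j (Finset.mem_univ j)
  let b : Fin (d + e) → ℕ := fun j => Fin.addCases (fun _ => e) (fun _ => 0) j
  have hent : ∀ j, (sylvester F H d e (σ j) j).natDegree + (σ j : ℕ) ≤ b j + j := by
    intro j
    have := hne j
    revert this
    generalize σ j = i
    induction j using Fin.addCases with
    | left j =>
      simp only [sylvester, Matrix.of_apply, Fin.addCases_left, b, Fin.val_castAdd]
      intro hn
      split_ifs at hn ⊢ with hi
      · have := hH.coeff_natDegree_add hn
        rw [Set.mem_Icc] at hi
        omega
      · exact absurd rfl hn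
    | right j =>
      simp only [sylvester, Matrix.of_apply, Fin.addCases_right, b, Fin.val_natAdd]
      intro hn
      split_ifs at hn ⊢ with hi
      · have := hF.coeff_natDegree_add hn
        rw [Set.mem_Icc] at hi
        omega
      · exact absurd rfl hn
  have hsum := Finset.sum_le_sum fun j (_ : j ∈ Finset.univ) => hent j
  rw [Finset.sum_add_distrib, Finset.sum_add_distrib, Equiv.sum_comp σ (fun i => (i : ℕ)),
    Fin.sum_univ_add (fun j => b j)] at hsum
  simp only [b, Fin.addCases_left, Fin.addCases_right, Finset.sum_const, Finset.card_univ,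
    Fintype.card_fin, smul_eq_mul, mul_zero, add_zero] at hsum
  omega

/-- Local intersection multiplicity: if `F ≡ c (X - x₀) ^ (k + 2)` and `H ≡ (X - x₀) ^ k B` modulo
the tangent `L` at a point `(x₀, y₀)`, and the cofactor of `L` in `F` is a unit at that point,
then `(X - x₀) ^ k` divides every element of `ℂ[X] ∩ (F, H)`. -/
lemma pow_dvd_of_mem {k n : ℕ} {F H G A B L a b : ℂ[X][X]} {R : ℂ[X]} {c u x₀ y₀ : ℂ}
    (hF : F = C (C c * (X - C x₀) ^ (k + 2)) + L * G) (hH : H = L * A + C ((X - C x₀) ^ k) * B)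
    (hG : G.evalEval x₀ y₀ ≠ 0) (hp : F.evalEval x₀ y₀ = 0) (hu : u ≠ 0)
    (hcoeff : F.coeff n = C u) (hR : F * a + H * b = C R) : (X - C x₀) ^ k ∣ R := by
  set ξ : ℂ[X] := X - C x₀ with hξ
  have hprime : Prime (C ξ : ℂ[X][X]) := Polynomial.prime_C_iff.mpr (prime_X_sub_C x₀)
  have hnd : ¬ C ξ ∣ F := by
    intro h
    rw [Polynomial.C_dvd_iff_dvd_coeff] at h
    have := h n
    rw [hcoeff, hξ, dvd_iff_isRoot] at this
    exact hu (by simpa using this)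
  have key : G * C R = F * (G * a + A * b)
      + C (ξ ^ k) * (G * B * b - C (C c * ξ ^ 2) * A * b) := by
    have e1 : L * G = F - C (C c * ξ ^ (k + 2)) := by rw [hF]; ring
    rw [← hR, hH]
    have : G * (F * a + (L * A + C (ξ ^ k) * B) * b)
      = F * (G * a) + (L * G) * (A * b) + C (ξ ^ k) * (G * B * b) := by ring
    rw [this, e1]
    simp only [map_mul, map_pow]
    ring
  generalize G * a + A * b = E at key
  generalize G * B * b - C (C c * ξ ^ 2) * A * b = D at key
  have hξ0 : ξ.eval x₀ = 0 := by simp [hξ]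
  have main : ∀ j ≤ k, ξ ^ j ∣ R := by
    intro j
    induction j with
    | zero => intro _; simp
    | succ j ih =>
      intro hj
      obtain ⟨R', hR'⟩ := ih (by omega)
      have hFE : F * E = C ξ ^ j * (G * C R' - C ξ ^ (k - j) * D) := by
        have hk : (C ξ : ℂ[X][X]) ^ k = C ξ ^ j * C ξ ^ (k - j) := by
          rw [← pow_add]; congr 1; omega
        rw [hR'] at key
        simp only [map_mul, map_pow, hk] at key
        linear_combination -key
      obtain ⟨E', rfl⟩ := hprime.pow_dvd_of_dvd_mul_left j hnd ⟨_, hFE⟩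
      have hFE' : F * E' = G * C R' - C ξ ^ (k - j) * D := by
        apply mul_left_cancel₀ (pow_ne_zero j hprime.ne_zero)
        rw [← hFE]; ring
      have hev := congrArg (evalEval x₀ y₀) hFE'
      have hkj : k - j ≠ 0 := by omega
      simp only [evalEval_mul, evalEval_sub, evalEval_pow, evalEval_C, hp, hξ0, zero_mul,
        zero_pow hkj, sub_zero] at hev
      have hroot : R'.eval x₀ = 0 := (mul_eq_zero.mp hev.symm).resolve_left hG
      rw [← IsRoot.def, ← dvd_iff_isRoot] at hroot
      rw [hR', pow_succ]
      exact mul_dvd_mul_left _ hroot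
  exact main k le_rfl

end Polynomial

/-! ### Non-vanishing of the resultant -/

namespace Polynomial

/-- Let `F` have total degree at most `n`, and let `g` be a monic nonconstant factor of `F = g h`.
Then `h` has degree less than `n` on every non-vertical line `Y = ℓ(X)`. The line is moved in the
pencil of lines with varying slope: over the generic member `g` is not constant. -/
lemma natDegree_eval_lt {n : ℕ} {g h : ℂ[X][X]} (hF : TotalDegLE n (g * h)) (hg : g.Monic)
    (hg1 : 1 ≤ g.natDegree) (hh : h ≠ 0) (r t : ℂ) :
    (h.eval (C r + C t * X)).natDegree < n := by
  -- in the target the inner variable is the slope `s`, the outer one is `x`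
  let Λ : ℂ[X][X] := C (C r) + C (C t) * X + C X * X
  let θ : ℂ[X][X] →+* ℂ[X][X] := eval₂RingHom (mapRingHom C) Λ
  have hΛ : Λ.natDegree ≤ 1 := by simp only [Λ]; compute_degree
  have hθ : (θ (g * h)).natDegree ≤ n := by
    simp only [θ, coe_eval₂RingHom, eval₂_eq_sum_range]
    refine natDegree_sum_le_of_forall_le _ _ fun i hi => ?_
    by_cases h0 : (g * h).coeff i = 0
    · simp [h0]
    refine natDegree_mul_le.trans ?_
    have h1 := natDegree_pow_le_of_le i hΛ
    have h2 : (mapRingHom C ((g * h).coeff i)).natDegree ≤ ((g * h).coeff i).natDegree :=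
      natDegree_map_le
    have h3 := hF.coeff_natDegree_add h0
    omega
  -- specialising `x` in `θ P`
  have hx : ∀ (P : ℂ[X][X]) (a : ℂ), (θ P).eval (C a)
      = (P.map (evalRingHom a)).comp (C (r + t * a) + C a * X) := by
    intro P a
    have : (evalRingHom (C a)).comp θ = (compRingHom (C (r + t * a) + C a * X)).comp
        (mapRingHom (evalRingHom a)) := by
      apply Polynomial.ringHom_ext'
      · ext x <;> simp [θ]
      · simp [θ, Λ]
    exact congrArg (fun φ => φ P) this
  have hs : ∀ P : ℂ[X][X], (θ P).map (evalRingHom 0) = P.eval (C r + C t * X) := by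
    intro P
    have : (mapRingHom (evalRingHom 0)).comp θ = evalRingHom (C r + C t * X) := by
      apply Polynomial.ringHom_ext'
      · ext x <;> simp [θ]
      · simp [θ, Λ]
    exact congrArg (fun φ => φ P) this
  have hg1' : ((g.map (evalRingHom 1)).comp (C (r + t * 1) + C 1 * X)).natDegree = g.natDegree := by
    rw [natDegree_comp, hg.natDegree_map]
    have : (C (r + t * 1) + C 1 * X : ℂ[X]).natDegree = 1 := by
      rw [add_comm]; exact natDegree_linear one_ne_zero
    rw [this, mul_one]
  have hθg : 1 ≤ (θ g).natDegree := by
    by_contra hlt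
    obtain ⟨a, ha⟩ := natDegree_eq_zero.mp (show (θ g).natDegree = 0 by omega)
    have e0 := hx g 0
    have e1 := hx g 1
    rw [← ha, eval_C] at e0 e1
    rw [← e1, e0] at hg1'
    have : ((g.map (evalRingHom 0)).comp (C (r + t * 0) + C 0 * X)).natDegree = 0 := by
      simp only [map_zero, zero_mul, add_zero, comp_C, natDegree_C]
    omega
  have hθ0 : ∀ P : ℂ[X][X], P ≠ 0 → θ P ≠ 0 := by
    intro P hP h0
    apply hP
    have hz : ∀ a : ℂ, a ≠ 0 → P.map (evalRingHom a) = 0 := by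
      intro a ha
      have := hx P a
      rw [h0, eval_zero] at this
      rcases comp_eq_zero_iff.mp this.symm with h | ⟨_, h⟩
      · exact h
      · have := congrArg (fun p => coeff p 1) h
        simp [coeff_C] at this
        exact absurd this ha
    ext1 i
    rw [coeff_zero]
    refine eq_zero_of_infinite_isRoot _ ((Set.finite_singleton (0 : ℂ)).infinite_compl.mono ?_)
    intro a ha
    have := congrArg (fun p => coeff p i) (hz a ha)
    simpa using this
  have hmul : (θ (g * h)).natDegree = (θ g).natDegree + (θ h).natDegree := by
    rw [map_mul, natDegree_mul (hθ0 g hg.ne_zero) (hθ0 h hh)]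
  have : (h.eval (C r + C t * X)).natDegree ≤ (θ h).natDegree := by
    rw [← hs]; exact natDegree_map_le
  omega

/-- A vanishing resultant of `F` (of full degree in `Y`) and `H` produces a common factor, which
may be taken monic in `Y`. -/
lemma exists_common_factor {d e : ℕ} {F H : ℂ[X][X]} {u : ℂ} (hu : u ≠ 0)
    (hFd : F.natDegree ≤ d) (hcoeff : F.coeff d = C u) (hHe : H.natDegree ≤ e)
    (hR : resultant F H d e = 0) :
    ∃ g : ℂ[X][X], g.Monic ∧ 1 ≤ g.natDegree ∧ g ∣ F ∧ g ∣ H := by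
  have hC : (C u : ℂ[X]) ≠ 0 := C_ne_zero.mpr hu
  have hFd' : F.natDegree = d := le_antisymm hFd (le_natDegree_of_ne_zero (by rw [hcoeff]; exact hC))
  let K := FractionRing ℂ[X]
  let ι := algebraMap ℂ[X] K
  have hι : Function.Injective ι := IsFractionRing.injective _ _
  obtain ⟨r, rfl⟩ := Nat.exists_eq_add_of_le hHe
  rw [resultant_add_right_deg _ _ _ _ _ le_rfl, hcoeff] at hR
  have hR' := (mul_eq_zero.mp hR).resolve_left (pow_ne_zero _ hC)
  have hRK : resultant (F.map ι) (H.map ι) = 0 := by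
    rw [natDegree_map_eq_of_injective hι, natDegree_map_eq_of_injective hι, resultant_map_map,
      hFd', hR', map_zero]
  obtain ⟨-, hnc⟩ := resultant_eq_zero_iff.mp hRK
  have hF0 : F.map ι ≠ 0 := by
    rw [Polynomial.map_ne_zero_iff hι]
    rintro rfl
    simp at hcoeff
    exact hC hcoeff.symm
  set g₀ := EuclideanDomain.gcd (F.map ι) (H.map ι) with hg₀
  have hgu : ¬ IsUnit g₀ := fun h => hnc (EuclideanDomain.gcd_isUnit_iff.mp h)
  have hgF : g₀ ∣ F.map ι := EuclideanDomain.gcd_dvd_left _ _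
  have hgH : g₀ ∣ H.map ι := EuclideanDomain.gcd_dvd_right _ _
  have hg0 : g₀ ≠ 0 := ne_zero_of_dvd_ne_zero hF0 hgF
  have hmon : (C (C u⁻¹) * F).Monic := by
    apply monic_of_natDegree_le_of_coeff_eq_one d ((natDegree_C_mul_le _ _).trans hFd)
    rw [coeff_C_mul, hcoeff, ← C_mul, inv_mul_cancel₀ hu, C_1]
  obtain ⟨g, hg⟩ := IsIntegrallyClosed.eq_map_mul_C_of_dvd K hmon (g := g₀) (by
    rw [Polynomial.map_mul]; exact hgF.mul_left _)
  have hlc : g₀.leadingCoeff ≠ 0 := leadingCoeff_ne_zero.mpr hg0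
  have hgmap : g.map ι = g₀ * C g₀.leadingCoeff⁻¹ := by
    have hg' : g.map ι * C g₀.leadingCoeff = g₀ := hg
    calc g.map ι = g.map ι * C g₀.leadingCoeff * C g₀.leadingCoeff⁻¹ := by
          rw [mul_assoc, ← C_mul, mul_inv_cancel₀ hlc, C_1, mul_one]
      _ = _ := by rw [hg']
  have hgm : g.Monic := by
    apply monic_of_injective hι
    rw [hgmap]
    exact monic_mul_leadingCoeff_inv hg0
  have hdv : g.map ι ∣ g₀ := ⟨C g₀.leadingCoeff, hg.symm⟩
  refine ⟨g, hgm, ?_, (Polynomial.map_dvd_map ι hι hgm).mp (hdv.trans hgF),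
    (Polynomial.map_dvd_map ι hι hgm).mp (hdv.trans hgH)⟩
  by_contra hlt
  apply hgu
  have : g = 1 := hgm.natDegree_eq_zero.mp (by omega)
  rw [← hg, this, Polynomial.map_one, one_mul, isUnit_C]
  exact hlc.isUnit

/-- If at one point `(x₀, y₀)` the curve `F` has the line `L` as `(k + 2)`-fold tangent, while `H`
meets `L` there with multiplicity exactly `k`, then the resultant is not zero. Suppose
`F = g h` with `g` a common factor. Since `F` is smooth at the point, only one of `g`, `h` vanishes
there, and that one meets `L` with multiplicity `k + 2`. For `g` this exceeds the multiplicity `k`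
of `H`; for `h` it exceeds the degree of `h`. -/
lemma resultant_ne_zero_of_flex {k e : ℕ} {F H G A B L : ℂ[X][X]} {c u x₀ y₀ α β δ : ℂ}
    (hc : c ≠ 0) (hδ : δ ≠ 0) (hL : L = C (C α + C β * X) + C (C δ) * X)
    (hLp : α + β * x₀ + δ * y₀ = 0)
    (hF : F = C (C c * (X - C x₀) ^ (k + 2)) + L * G) (hH : H = L * A + C ((X - C x₀) ^ k) * B)
    (hG : G.evalEval x₀ y₀ ≠ 0) (hB : B.evalEval x₀ y₀ ≠ 0)
    (hu : u ≠ 0) (hcoeff : F.coeff (k + 2) = C u) (hdeg : TotalDegLE (k + 2) F)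
    (hHe : H.natDegree ≤ e) : resultant F H (k + 2) e ≠ 0 := by
  intro hR
  obtain ⟨g, hgm, hg1, ⟨h, hgh⟩, ⟨h', hgh'⟩⟩ :=
    exists_common_factor hu hdeg.natDegree_le hcoeff hHe hR
  let r : ℂ := -(α / δ)
  let t : ℂ := -(β / δ)
  let ev : ℂ[X][X] →+* ℂ[X] := evalRingHom (C r + C t * X)
  have hevL : ev L = 0 := by
    simp only [ev, hL, coe_evalRingHom, eval_add, eval_mul, eval_C, eval_X, r, t]
    have h1 : C α = C δ * C (α / δ) := by rw [← C_mul]; congr 1; field_simp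
    have h2 : C β = C δ * C (β / δ) := by rw [← C_mul]; congr 1; field_simp
    rw [h1, h2]
    simp only [C_neg]
    ring
  have hy : r + t * x₀ = y₀ := by
    simp only [r, t]; field_simp; linear_combination -hLp
  have hevp : ∀ P : ℂ[X][X], (ev P).eval x₀ = P.evalEval x₀ y₀ := by
    intro P
    have : (evalRingHom x₀).comp ev = evalEvalRingHom x₀ y₀ := by
      apply Polynomial.ringHom_ext'
      · ext x <;> simp [ev]
      · rw [← hy]; simp [ev]
    exact congrArg (fun φ => φ P) this
  have hevC : ∀ P, ev (C P) = P := fun P => by simp [ev]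
  have hF0 : F ≠ 0 := by
    rintro rfl
    simp at hcoeff
    exact hu (C_eq_zero.mp hcoeff.symm)
  have hh0 : h ≠ 0 := by rintro rfl; exact hF0 (by rw [hgh, mul_zero])
  have hprod : ev g * ev h = C c * (X - C x₀) ^ (k + 2) := by
    rw [← map_mul, ← hgh, hF, map_add ev, map_mul ev, hevL, zero_mul, add_zero, hevC]
  have hprod0 : ev g * ev h ≠ 0 := by
    rw [hprod]
    exact mul_ne_zero (C_ne_zero.mpr hc) (pow_ne_zero _ (X_sub_C_ne_zero x₀))
  have hdvd : (X - C x₀) ^ (k + 2) ∣ ev g * ev h := ⟨C c, by rw [hprod, mul_comm]⟩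
  have hpr : Prime (X - C x₀ : ℂ[X]) := prime_X_sub_C x₀
  by_cases hgp : g.evalEval x₀ y₀ = 0
  · have hhp : h.evalEval x₀ y₀ ≠ 0 := by
      intro hhp
      have hder := congrArg (fun P => evalEval x₀ y₀ (derivative P)) (hgh.symm.trans hF)
      have hLp' : L.evalEval x₀ y₀ = 0 := by
        rw [← hLp, hL]; simp [evalEval]
      have hL' : (derivative L).evalEval x₀ y₀ = δ := by
        rw [hL]; simp [evalEval]
      simp only [derivative_add, derivative_mul, derivative_C, evalEval_add, evalEval_mul, hgp, hhp,
        hLp', hL', zero_mul, mul_zero, add_zero, zero_add] at hder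
      rcases (by simpa using hder.symm : δ = 0 ∨ evalEval x₀ y₀ G = 0) with h1 | h1
      · exact hδ h1
      · exact hG h1
    have h1 : ¬ (X - C x₀) ∣ ev h := by
      rw [dvd_iff_isRoot, IsRoot.def, hevp]; exact hhp
    have h2 : (X - C x₀) ^ (k + 2) ∣ ev g := hpr.pow_dvd_of_dvd_mul_right _ h1 hdvd
    have h3 : ev H = (X - C x₀) ^ k * ev B := by
      rw [hH, map_add, map_mul, hevL, zero_mul, zero_add, map_mul, hevC]
    have h4 : (X - C x₀) ^ (k + 2) ∣ (X - C x₀) ^ k * ev B := by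
      rw [← h3, hgh', map_mul]
      exact h2.mul_right _
    rw [pow_add] at h4
    have h5 := (mul_dvd_mul_iff_left (pow_ne_zero _ hpr.ne_zero)).mp h4
    have h6 : (X - C x₀) ∣ ev B := (dvd_pow_self _ two_ne_zero).trans h5
    rw [dvd_iff_isRoot, IsRoot.def, hevp] at h6
    exact hB h6
  · have h1 : ¬ (X - C x₀) ∣ ev g := by
      rw [dvd_iff_isRoot, IsRoot.def, hevp]; exact hgp
    have h2 : (X - C x₀) ^ (k + 2) ∣ ev h := hpr.pow_dvd_of_dvd_mul_left _ h1 hdvd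
    have h3 := natDegree_le_of_dvd h2 (right_ne_zero_of_mul hprod0)
    rw [natDegree_pow, natDegree_X_sub_C, mul_one] at h3
    have h4 : (ev h).natDegree < k + 2 := natDegree_eval_lt (hgh ▸ hdeg) hgm hg1 hh0 r t
    omega

end Polynomial

/-! ### Affine charts -/

namespace Polynomial

/-- Restriction of a form to the affine chart `b + X w + Y q` of the plane, as a polynomial in `Y`
over `ℂ[X]`. -/
noncomputable def affine (b q w : Fin 3 → ℂ) : MvPolynomial (Fin 3) ℂ →ₐ[ℂ] ℂ[X][X] :=
  MvPolynomial.aeval fun i => C (C (b i) + X * C (w i)) + X * C (C (q i))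

variable {b q w : Fin 3 → ℂ}

lemma affine_C (a : ℂ) : affine b q w (MvPolynomial.C a) = C (C a) := by
  rw [affine, MvPolynomial.aeval_C]; rfl

lemma affine_X (i : Fin 3) :
    affine b q w (MvPolynomial.X i) = C (C (b i) + X * C (w i)) + X * C (C (q i)) := by
  rw [affine, MvPolynomial.aeval_X]

open Matrix in
lemma affine_lin (a : Fin 3 → ℂ) : affine b q w (lin a)
    = C (C (a ⬝ᵥ b) + C (a ⬝ᵥ w) * X) + C (C (a ⬝ᵥ q)) * X := by
  simp only [lin, dotProduct, Fin.sum_univ_three, map_add, map_mul, affine_C, affine_X]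
  ring

lemma evalEval_affine (x y : ℂ) (F : MvPolynomial (Fin 3) ℂ) :
    (affine b q w F).evalEval x y = MvPolynomial.eval (b + x • w + y • q) F := by
  have : (evalEvalRingHom x y).comp (affine b q w : MvPolynomial (Fin 3) ℂ →+* ℂ[X][X])
      = MvPolynomial.eval (b + x • w + y • q) := by
    apply MvPolynomial.ringHom_ext
    · intro r; simp
    · intro i; simp [affine_X]; ring
  exact congrArg (fun φ => φ F) this

lemma affine_coeff {F : MvPolynomial (Fin 3) ℂ} {n : ℕ} (hF : F.IsHomogeneous n) :
    (affine b q w F).coeff n = C (MvPolynomial.eval q F) := by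
  rw [affine, (pencil hF _ _).2]
  have := MvPolynomial.aeval_algebraMap_apply ℂ[X] q F
  rw [algebraMap_eq] at this
  rw [← MvPolynomial.aeval_eq_eval]
  exact this

lemma affine_totalDegLE {F : MvPolynomial (Fin 3) ℂ} {n : ℕ} (hF : F.IsHomogeneous n) :
    TotalDegLE n (affine b q w F) := by
  have hX : ∀ i, TotalDegLE 1 (affine b q w (MvPolynomial.X i)) := by
    intro i k j h
    rw [affine_X]
    rcases k with _ | _ | k
    · have : j ≠ 0 ∧ j ≠ 1 := by omega
      simp [coeff_C, coeff_X, this, Ne.symm this.2]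
    · have : j ≠ 0 := by omega
      simp [coeff_C, this]
    · simp
  rw [F.as_sum, map_sum]
  have hsum : ∀ s ⊆ F.support, TotalDegLE n
      (∑ e ∈ s, affine b q w (MvPolynomial.monomial e (MvPolynomial.coeff e F))) := by
    intro s
    induction s using Finset.induction_on with
    | empty => intro _ i j _; simp
    | insert e s he ih =>
      intro hs
      rw [Finset.sum_insert he]
      refine TotalDegLE.add ?_ (ih fun x hx => hs (Finset.mem_insert_of_mem hx))
      have hdeg : e 0 + e 1 + e 2 = n := by
        have := hF (MvPolynomial.mem_support_iff.mp (hs (Finset.mem_insert_self e s)))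
        rw [Finsupp.weight_apply, Finsupp.sum_fintype _ _ (by simp)] at this
        simpa [Fin.sum_univ_three] using this
      rw [MvPolynomial.monomial_eq, map_mul, affine_C, Finsupp.prod_pow, Fin.prod_univ_three]
      simp only [map_mul, map_pow]
      have h1 := (TotalDegLE.const (MvPolynomial.coeff e F)).mul
        ((((hX 0).pow (e 0)).mul ((hX 1).pow (e 1))).mul ((hX 2).pow (e 2)))
      exact h1.mono (by omega)
  exact hsum _ subset_rfl

open Matrix in
/-- The local shape of the curve and of its Hessian at a total inflection point, in the chart. -/
lemma local_form {f : MvPolynomial (Fin 3) ℂ} {k : ℕ} (hk : 1 ≤ k) (hf : f.IsHomogeneous (k + 2))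
    (hsm : ∀ x : Fin 3 → ℂ, x ≠ 0 → ∃ i : Fin 3, MvPolynomial.eval x (MvPolynomial.pderiv i f) ≠ 0)
    {p l : Fin 3 → ℂ} (hp : IsTotalInflection (k + 2) f p)
    (hl : l = fun i => MvPolynomial.eval p (MvPolynomial.pderiv i f)) (hlp : l ⬝ᵥ p = 0)
    (hq : l ⬝ᵥ q ≠ 0) (hw : (p ⨯₃ q) ⬝ᵥ w ≠ 0) {x y s : ℂ} (hs : p = s • (b + x • w + y • q)) :
    ∃ c : ℂ, c ≠ 0 ∧ ∃ G A B : ℂ[X][X],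
      affine b q w f = C (C c * (X - C x) ^ (k + 2)) + affine b q w (lin l) * G ∧
      affine b q w (hess f) = affine b q w (lin l) * A + C ((X - C x) ^ k) * B ∧
      G.evalEval x y ≠ 0 ∧ B.evalEval x y ≠ 0 ∧ (affine b q w f).evalEval x y = 0 ∧
      l ⬝ᵥ (b + x • w + y • q) = 0 := by
  obtain ⟨c, hc, G, hG, hfG⟩ := normal_form (by omega) hf hsm hp hl hlp hq hw
  obtain ⟨A, hA⟩ := hess_normal hfG
  have hs0 : s ≠ 0 := by
    rintro rfl
    exact hp.1 (by simpa using hs)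
  set P := b + x • w + y • q with hP
  have hP0 : P ≠ 0 := by
    intro h
    exact hp.1 (by rw [hs, h, smul_zero])
  have hlP : l ⬝ᵥ P = 0 := by
    rw [hs, dotProduct_smul] at hlp
    exact (smul_eq_zero.mp hlp).resolve_left hs0
  have hmP : (p ⨯₃ q) ⬝ᵥ P = 0 := by
    have : (p ⨯₃ q) ⬝ᵥ p = 0 := by rw [dotProduct_comm]; exact dot_self_cross _ _
    nth_rewrite 2 [hs] at this
    rw [dotProduct_smul] at this
    exact (smul_eq_zero.mp this).resolve_left hs0
  have hmq : (p ⨯₃ q) ⬝ᵥ q = 0 := by rw [dotProduct_comm]; exact dot_cross_self _ _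
  obtain ⟨hfP, hGP, hJP⟩ := values_at (by omega) hsm hP0 hlP hmP hmq hq hw hG hfG
  set m := p ⨯₃ q with hm
  have hφm : affine b q w (lin m) = C (C (m ⬝ᵥ w) * (X - C x)) := by
    have hmb : m ⬝ᵥ b = -(m ⬝ᵥ w * x) := by
      rw [hP, dotProduct_add, dotProduct_add, dotProduct_smul, dotProduct_smul, hmq] at hmP
      simp only [smul_eq_mul, mul_zero, add_zero] at hmP
      linear_combination hmP
    rw [affine_lin, hmq, hmb]
    simp only [map_neg, map_mul, map_zero, zero_mul, add_zero, map_add, map_sub]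
    ring
  refine ⟨c * (m ⬝ᵥ w) ^ (k + 2), mul_ne_zero hc (pow_ne_zero _ hw), affine b q w G,
    affine b q w A, C (C ((m ⬝ᵥ w) ^ k)) * affine b q w
      (MvPolynomial.C (-(c * (k + 2) * (k + 1))) * jac m l G ^ 2), ?_, ?_, ?_, ?_, ?_, hlP⟩
  · nth_rewrite 1 [hfG]
    rw [map_add, map_mul, map_mul, map_pow, hφm, affine_C]
    simp only [map_mul, map_pow, mul_pow]
    ring
  · rw [hA, map_add, map_mul, map_mul _ (lin m ^ k), map_pow, hφm]
    simp only [map_mul, map_pow, mul_pow]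
    ring
  · rw [evalEval_affine]; exact hGP
  · rw [evalEval_mul, evalEval_affine, evalEval_C, eval_C]
    refine mul_ne_zero (pow_ne_zero _ hw) ?_
    rw [map_mul, map_pow, MvPolynomial.eval_C]
    refine mul_ne_zero (neg_ne_zero.mpr (mul_ne_zero (mul_ne_zero hc ?_) ?_)) (pow_ne_zero _ hJP)
    · exact_mod_cast (by omega : k + 2 ≠ 0)
    · exact_mod_cast (by omega : k + 1 ≠ 0)
  · rw [evalEval_affine]; exact hfP

open Matrix in
/-- The bound, for total inflection points in general position with respect to the chart. -/
lemma card_le_of_chart {f : MvPolynomial (Fin 3) ℂ} {k : ℕ} (hk : 1 ≤ k)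
    (hf : f.IsHomogeneous (k + 2))
    (hsm : ∀ x : Fin 3 → ℂ, x ≠ 0 → ∃ i : Fin 3, MvPolynomial.eval x (MvPolynomial.pderiv i f) ≠ 0)
    {ι : Type*} [Fintype ι] [Nonempty ι] {p l : ι → Fin 3 → ℂ}
    (hp : ∀ i, IsTotalInflection (k + 2) f (p i))
    (hl : ∀ i, l i = fun j => MvPolynomial.eval (p i) (MvPolynomial.pderiv j f))
    (hlp : ∀ i, l i ⬝ᵥ p i = 0) (hfq : MvPolynomial.eval q f ≠ 0)
    (hlq : ∀ i, l i ⬝ᵥ q ≠ 0) (hmw : ∀ i, (p i ⨯₃ q) ⬝ᵥ w ≠ 0)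
    (hpq : ∀ i j, i ≠ j → (p i ⨯₃ p j) ⬝ᵥ q ≠ 0) : Fintype.card ι ≤ 3 * (k + 2) := by
  obtain ⟨i₀⟩ := ‹Nonempty ι›
  have hmq : ∀ i, (p i ⨯₃ q) ⬝ᵥ q = 0 := fun i => by
    rw [dotProduct_comm]; exact dot_cross_self _ _
  have hmp : ∀ i, (p i ⨯₃ q) ⬝ᵥ p i = 0 := fun i => by
    rw [dotProduct_comm]; exact dot_self_cross _ _
  have hco : ∀ i, ∃ x y s : ℂ, p i = s • (p i₀ + x • w + y • q) := by
    intro i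
    obtain ⟨s, y, x, h⟩ := exists_combination (hmw i₀) (p i)
    have hs : s ≠ 0 := by
      rintro rfl
      -- otherwise `p i` lies on the line through `q` and `w`
      have h1 := hmp i
      nth_rewrite 2 [h] at h1
      simp only [dotProduct_add, dotProduct_smul, hmq, zero_smul, smul_eq_mul, mul_zero,
        zero_add] at h1
      have hx : x = 0 := (mul_eq_zero.mp h1).resolve_right (hmw i)
      subst hx
      apply hmw i
      rw [h]
      simp
    refine ⟨x / s, y / s, s, ?_⟩
    rw [h, smul_add, smul_add, smul_smul, smul_smul]
    rw [mul_div_cancel₀ _ hs, mul_div_cancel₀ _ hs]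
    abel
  choose x y s hs using hco
  have hxinj : Function.Injective x := by
    intro i j hij
    by_contra hne
    apply hpq i j hne
    rw [hs i, hs j, hij]
    simp only [cross_apply, dotProduct, Fin.sum_univ_three, Pi.smul_apply, Pi.add_apply,
      smul_eq_mul, cons_val_zero, cons_val_one, cons_val]
    ring
  have hloc := fun i => local_form hk hf hsm (hp i) (hl i) (hlp i) (hlq i) (hmw i) (hs i)
  set F := affine (p i₀) q w f
  set H := affine (p i₀) q w (hess f)
  have hFd : TotalDegLE (k + 2) F := affine_totalDegLE hf
  have hHd : TotalDegLE (3 * k) H := by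
    have := hess_homog hf
    rw [Nat.add_sub_cancel] at this
    exact affine_totalDegLE this
  have hFc : F.coeff (k + 2) = C (MvPolynomial.eval q f) := affine_coeff hf
  set R := resultant F H (k + 2) (3 * k) with hR
  have hR0 : R ≠ 0 := by
    obtain ⟨c, hc, G, A, B, h1, h2, h3, h4, -, h6⟩ := hloc i₀
    refine resultant_ne_zero_of_flex hc (hlq i₀) (affine_lin (l i₀)) ?_ h1 h2 h3 h4 hfq hFc hFd
      hHd.natDegree_le
    rw [dotProduct_add, dotProduct_add, dotProduct_smul, dotProduct_smul] at h6
    simp only [smul_eq_mul] at h6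
    linear_combination h6
  obtain ⟨a, b, -, -, hab⟩ := exists_mul_add_mul_eq_C_resultant F H hFd.natDegree_le
    hHd.natDegree_le (Or.inl (by omega))
  have hdvd : ∀ i, (X - C (x i)) ^ k ∣ R := by
    intro i
    obtain ⟨c, hc, G, A, B, h1, h2, h3, h4, h5, -⟩ := hloc i
    exact pow_dvd_of_mem h1 h2 h3 h5 hfq hFc hab
  have hprod : ∏ i, (X - C (x i)) ^ k ∣ R :=
    Finset.prod_dvd_of_coprime
      (fun i _ j _ hij => (pairwise_coprime_X_sub_C hxinj hij).pow) fun i _ => hdvd i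
  have h1 := natDegree_le_of_dvd hprod hR0
  have h2 := natDegree_resultant_le hFd hHd
  rw [natDegree_prod _ _ fun i _ => pow_ne_zero _ (X_sub_C_ne_zero _)] at h1
  simp only [natDegree_pow, natDegree_X_sub_C, mul_one, Finset.sum_const, Finset.card_univ,
    smul_eq_mul] at h1
  have h3 : Fintype.card ι * k ≤ (3 * (k + 2)) * k := by
    calc _ ≤ _ := h1.trans h2
      _ = _ := by ring
  exact Nat.le_of_mul_le_mul_right h3 (by omega)

end Polynomial

/-! ### Generic coordinates and the count -/

lemma exists_eval_ne_zero {F : MvPolynomial (Fin 3) ℂ} (hF : F ≠ 0) : ∃ v, eval v F ≠ 0 := by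
  by_contra! h
  exact hF (MvPolynomial.funext fun v => by rw [h v, map_zero])

open Matrix in
/-- The bound for a finite family of pairwise distinct points of the projective plane: a generic
choice of coordinates puts it in general position. -/
lemma card_le_of_family {d : ℕ} (hd : 3 ≤ d) {f : MvPolynomial (Fin 3) ℂ} (hf : f.IsHomogeneous d)
    (hsm : ∀ x : Fin 3 → ℂ, x ≠ 0 → ∃ i : Fin 3, eval x (pderiv i f) ≠ 0)
    {ι : Type*} [Fintype ι] [Nonempty ι] {p : ι → Fin 3 → ℂ}
    (hp : ∀ i, IsTotalInflection d f (p i)) (hpp : ∀ i j, i ≠ j → p i ⨯₃ p j ≠ 0) :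
    Fintype.card ι ≤ 3 * d := by
  classical
  obtain ⟨k, rfl⟩ : ∃ k, d = k + 2 := ⟨d - 2, by omega⟩
  let l : ι → Fin 3 → ℂ := fun i j => eval (p i) (pderiv j f)
  have hl0 : ∀ i, l i ≠ 0 := by
    intro i h
    obtain ⟨j, hj⟩ := hsm (p i) (hp i).1
    exact hj (congrFun h j)
  have hlp : ∀ i, l i ⬝ᵥ p i = 0 := by
    intro i
    have hE := congrArg (eval (p i)) hf.sum_X_mul_pderiv
    rw [Fin.sum_univ_three] at hE
    simp only [map_add, map_mul, eval_X, nsmul_eq_mul, (hp i).2.1, mul_zero] at hE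
    simp only [l, dotProduct, Fin.sum_univ_three]
    linear_combination hE
  have hf0 : f ≠ 0 := by
    rintro rfl
    obtain ⟨i⟩ := ‹Nonempty ι›
    obtain ⟨j, hj⟩ := hsm (p i) (hp i).1
    simp at hj
  obtain ⟨q, hq⟩ := exists_eval_ne_zero (F := f * (∏ i, lin (l i)) *
      ∏ i, ∏ j, if i = j then 1 else lin (p i ⨯₃ p j)) (by
    refine mul_ne_zero (mul_ne_zero hf0 ?_) ?_
    · exact Finset.prod_ne_zero_iff.mpr fun i _ => lin_ne_zero (hl0 i)
    · refine Finset.prod_ne_zero_iff.mpr fun i _ => Finset.prod_ne_zero_iff.mpr fun j _ => ?_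
      split_ifs with h
      · exact one_ne_zero
      · exact lin_ne_zero (hpp i j h))
  rw [map_mul, map_mul, map_prod, map_prod] at hq
  have hfq := left_ne_zero_of_mul (left_ne_zero_of_mul hq)
  have hlq : ∀ i, l i ⬝ᵥ q ≠ 0 := fun i => by
    have := Finset.prod_ne_zero_iff.mp (right_ne_zero_of_mul (left_ne_zero_of_mul hq)) i
      (Finset.mem_univ i)
    rwa [eval_lin] at this
  have hpq : ∀ i j, i ≠ j → (p i ⨯₃ p j) ⬝ᵥ q ≠ 0 := fun i j hij => by
    have := Finset.prod_ne_zero_iff.mp (right_ne_zero_of_mul hq) i (Finset.mem_univ i)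
    rw [map_prod] at this
    have := Finset.prod_ne_zero_iff.mp this j (Finset.mem_univ j)
    rwa [if_neg hij, eval_lin] at this
  have hm0 : ∀ i, p i ⨯₃ q ≠ 0 := by
    intro i
    rw [crossProduct_ne_zero_iff_linearIndependent, LinearIndependent.pair_iff]
    intro s t hst
    have h := congrArg (fun v => l i ⬝ᵥ v) hst
    simp only [dotProduct_add, dotProduct_smul, hlp, smul_zero, zero_add, dotProduct_zero] at h
    have ht : t = 0 := (smul_eq_zero.mp h).resolve_right (hlq i)
    subst ht
    rw [zero_smul, add_zero] at hst
    exact ⟨(smul_eq_zero.mp hst).resolve_right (hp i).1, rfl⟩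
  obtain ⟨w, hw⟩ := exists_eval_ne_zero (F := ∏ i, lin (p i ⨯₃ q))
    (Finset.prod_ne_zero_iff.mpr fun i _ => lin_ne_zero (hm0 i))
  have hmw : ∀ i, (p i ⨯₃ q) ⬝ᵥ w ≠ 0 := fun i => by
    rw [map_prod] at hw
    have := Finset.prod_ne_zero_iff.mp hw i (Finset.mem_univ i)
    rwa [eval_lin] at this
  exact Polynomial.card_le_of_chart (by omega) hf hsm hp (fun _ => rfl) hlp hfq hlq hmw hpq

lemma eq_span_of_finrank_eq_one {ℓ : Submodule ℂ (Fin 3 → ℂ)} (h : Module.finrank ℂ ℓ = 1)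
    {x : Fin 3 → ℂ} (hx : x ∈ ℓ) (hx0 : x ≠ 0) : ℂ ∙ x = ℓ :=
  Submodule.eq_of_le_of_finrank_eq ((Submodule.span_singleton_le_iff_mem _ _).mpr hx)
    (by rw [finrank_span_singleton hx0, h])

/-- A smooth plane curve of degree `d ≥ 3` has at most `3d` total inflection points
(counted as points of ℙ², i.e. 1-dimensional subspaces of ℂ³). -/
theorem card_total_inflections_le (d : ℕ) (hd : 3 ≤ d)
    (f : MvPolynomial (Fin 3) ℂ) (hf : f.IsHomogeneous d)
    (hsm : ∀ x : Fin 3 → ℂ, x ≠ 0 → ∃ i : Fin 3, eval x (pderiv i f) ≠ 0) :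
    {ℓ : Submodule ℂ (Fin 3 → ℂ) |
        Module.finrank ℂ ℓ = 1 ∧ ∃ x ∈ ℓ, IsTotalInflection d f x}.Finite ∧
    {ℓ : Submodule ℂ (Fin 3 → ℂ) |
        Module.finrank ℂ ℓ = 1 ∧ ∃ x ∈ ℓ, IsTotalInflection d f x}.ncard ≤ 3 * d := by
  classical
  set S := {ℓ : Submodule ℂ (Fin 3 → ℂ) |
        Module.finrank ℂ ℓ = 1 ∧ ∃ x ∈ ℓ, IsTotalInflection d f x} with hS
  have key : ∀ T : Finset (Submodule ℂ (Fin 3 → ℂ)), (T : Set _) ⊆ S → T.card ≤ 3 * d := by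
    intro T hT
    rcases T.eq_empty_or_nonempty with rfl | hne
    · simp
    have hT' : ∀ ℓ : T, Module.finrank ℂ ℓ.1 = 1 ∧ ∃ x ∈ ℓ.1, IsTotalInflection d f x :=
      fun ℓ => hT ℓ.2
    choose h1 p hpm hp using hT'
    have : Nonempty T := hne.to_subtype
    rw [← Fintype.card_coe]
    refine card_le_of_family hd hf hsm hp fun i j hij => ?_
    rw [crossProduct_ne_zero_iff_linearIndependent, LinearIndependent.pair_iff]
    intro s t hst
    have ht : t = 0 := by
      by_contra ht
      apply hij
      have hj : p j ∈ i.1 := by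
        rw [← Submodule.smul_mem_iff _ ht, eq_neg_of_add_eq_zero_right hst]
        exact i.1.neg_mem (i.1.smul_mem _ (hpm i))
      exact Subtype.ext ((eq_span_of_finrank_eq_one (h1 i) hj (hp j).1).symm.trans
        (eq_span_of_finrank_eq_one (h1 j) (hpm j) (hp j).1))
    subst ht
    rw [zero_smul, add_zero] at hst
    exact ⟨(smul_eq_zero.mp hst).resolve_right (hp i).1, rfl⟩
  have hfin : S.Finite := by
    by_contra hinf
    obtain ⟨T, hT, hcard⟩ := Set.Infinite.exists_subset_card_eq hinf (3 * d + 1)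
    have := key T hT
    omega
  refine ⟨hfin, ?_⟩
  rw [Set.ncard_eq_toFinset_card S hfin]
  exact key _ (by simp)
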